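/- For every two-user discrete memoryless interference channel with degraded message sets in which transmitter 1 knows both messages, the capacity region satisfies C^{T₁}_{IFC} ⊆ ℛ_o, where ℛ_o is the set of all rate pairs (R₁,R₂) such that R₁ ≤ I(X₁;Y₁|X₂), R₂ ≤ I(U,X₂;Y₂), and R₁ + R₂ ≤ I(X₁;Y₁|U,X₂) + I(U,X₂;Y₂) for some finite-valued auxiliary random variable U whose joint distribution with the inputs and outputs factors as p(u,x₂)·p(x₁|u)·P(y₁,y₂|x₁,x₂). -/

import Mathlib

open scoped BigOperators

noncomputable section

/-- Shannon entropy (base 2) of a finitely supported probability vector. -/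
def ent {A : Type*} [Fintype A] (p : A → ℝ) : ℝ :=
  -∑ a, p a * Real.logb 2 (p a)

/-- The distribution (pushforward) of a random variable `f` on a finite
probability space with probability mass function `μ`. -/
def lawOf {Ω A : Type*} [Fintype Ω] [DecidableEq A] (μ : Ω → ℝ) (f : Ω → A) : A → ℝ :=
  fun a => ∑ ω, if f ω = a then μ ω else 0

/-- Shannon entropy (base 2) of a random variable `f` on a finite probability space. -/
def entRV {Ω A : Type*} [Fintype Ω] [Fintype A] [DecidableEq A] (μ : Ω → ℝ) (f : Ω → A) : ℝ :=
  ent (lawOf μ f)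

/-- Mutual information `I(f; g)` (base 2) on a finite probability space. -/
def miRV {Ω A B : Type*} [Fintype Ω] [Fintype A] [Fintype B] [DecidableEq A] [DecidableEq B]
    (μ : Ω → ℝ) (f : Ω → A) (g : Ω → B) : ℝ :=
  entRV μ f + entRV μ g - entRV μ (fun ω => (f ω, g ω))

/-- Conditional mutual information `I(f; g | h)` (base 2) on a finite probability space. -/
def cmiRV {Ω A B C : Type*} [Fintype Ω] [Fintype A] [Fintype B] [Fintype C]
    [DecidableEq A] [DecidableEq B] [DecidableEq C]
    (μ : Ω → ℝ) (f : Ω → A) (g : Ω → B) (h : Ω → C) : ℝ :=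
  entRV μ (fun ω => (f ω, h ω)) + entRV μ (fun ω => (g ω, h ω))
    - entRV μ (fun ω => (f ω, g ω, h ω)) - entRV μ h

/-- A two-user discrete memoryless interference channel with finite input alphabets
`X1`, `X2` and finite output alphabets `Y1`, `Y2`. -/
structure DMIFC (X1 X2 Y1 Y2 : Type) [Fintype X1] [Fintype X2] [Fintype Y1] [Fintype Y2] where
  W : X1 → X2 → Y1 → Y2 → ℝ
  nonneg : ∀ x1 x2 y1 y2, 0 ≤ W x1 x2 y1 y2
  sum_one : ∀ x1 x2, ∑ y1, ∑ y2, W x1 x2 y1 y2 = 1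

variable {X1 X2 Y1 Y2 : Type} [Fintype X1] [Fintype X2] [Fintype Y1] [Fintype Y2]
  [DecidableEq X1] [DecidableEq X2] [DecidableEq Y1] [DecidableEq Y2]

/-- Average probability that receiver 1 decodes its message incorrectly, for a given
code for the IFC with degraded message sets (transmitter 1 knows both messages),
with the messages uniform and independent and the channel used `n` times without feedback. -/
def pe1 (ch : DMIFC X1 X2 Y1 Y2) (n M1 M2 : ℕ)
    (f1 : Fin M1 → Fin M2 → Fin n → X1) (f2 : Fin M2 → Fin n → X2)
    (g1 : (Fin n → Y1) → Fin M1) : ℝ :=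
  (1 / (M1 * M2) : ℝ) * ∑ w1 : Fin M1, ∑ w2 : Fin M2, ∑ y1 : Fin n → Y1, ∑ y2 : Fin n → Y2,
    (∏ i, ch.W (f1 w1 w2 i) (f2 w2 i) (y1 i) (y2 i)) * (if g1 y1 = w1 then 0 else 1)

/-- Average probability that receiver 2 decodes its message incorrectly. -/
def pe2 (ch : DMIFC X1 X2 Y1 Y2) (n M1 M2 : ℕ)
    (f1 : Fin M1 → Fin M2 → Fin n → X1) (f2 : Fin M2 → Fin n → X2)
    (g2 : (Fin n → Y2) → Fin M2) : ℝ :=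
  (1 / (M1 * M2) : ℝ) * ∑ w1 : Fin M1, ∑ w2 : Fin M2, ∑ y1 : Fin n → Y1, ∑ y2 : Fin n → Y2,
    (∏ i, ch.W (f1 w1 w2 i) (f2 w2 i) (y1 i) (y2 i)) * (if g2 y2 = w2 then 0 else 1)

/-- A rate pair `(R1, R2)` is achievable for the IFC with degraded message sets
(transmitter 1 informed) if there are codes of arbitrarily small error probability
whose rates are arbitrarily close to `(R1, R2)`. -/
def AchievableT1 (ch : DMIFC X1 X2 Y1 Y2) (R1 R2 : ℝ) : Prop :=
  ∀ ε : ℝ, 0 < ε → ∃ (n M1 M2 : ℕ) (f1 : Fin M1 → Fin M2 → Fin n → X1)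
    (f2 : Fin M2 → Fin n → X2) (g1 : (Fin n → Y1) → Fin M1) (g2 : (Fin n → Y2) → Fin M2),
    0 < n ∧ 0 < M1 ∧ 0 < M2 ∧
    R1 - ε ≤ Real.logb 2 M1 / n ∧ R2 - ε ≤ Real.logb 2 M2 / n ∧
    pe1 ch n M1 M2 f1 f2 g1 ≤ ε ∧ pe2 ch n M1 M2 f1 f2 g2 ≤ ε

/-- The capacity region `C^{T₁}_{IFC}` of the IFC with degraded message sets
(transmitter 1 knows both messages): the closure of the set of achievable rate pairs. -/
def CapacityT1 (ch : DMIFC X1 X2 Y1 Y2) : Set (ℝ × ℝ) :=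
  closure {R : ℝ × ℝ | AchievableT1 ch R.1 R.2}

/-- The joint distribution on `(U, X₁, X₂, Y₁, Y₂)` factoring as
`p(u,x₂) p(x₁|u) P(y₁,y₂|x₁,x₂)`. -/
def jointOut (ch : DMIFC X1 X2 Y1 Y2) (nU : ℕ)
    (pUX2 : Fin nU → X2 → ℝ) (pX1 : Fin nU → X1 → ℝ) :
    Fin nU × X1 × X2 × Y1 × Y2 → ℝ :=
  fun p => pUX2 p.1 p.2.2.1 * pX1 p.1 p.2.1 * ch.W p.2.1 p.2.2.1 p.2.2.2.1 p.2.2.2.2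

/-- The outer-bound region `ℛ_o`: all rate pairs `(R₁, R₂)` with
`R₁ ≤ I(X₁; Y₁ | X₂)`, `R₂ ≤ I(U, X₂; Y₂)` and
`R₁ + R₂ ≤ I(X₁; Y₁ | U, X₂) + I(U, X₂; Y₂)` for some finite-valued auxiliary
random variable `U` whose joint distribution with the inputs and outputs factors
as `p(u,x₂) p(x₁|u) P(y₁,y₂|x₁,x₂)`. -/
def Ro (ch : DMIFC X1 X2 Y1 Y2) : Set (ℝ × ℝ) :=
  {R | ∃ (nU : ℕ) (pUX2 : Fin nU → X2 → ℝ) (pX1 : Fin nU → X1 → ℝ),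
    (∀ u x2, 0 ≤ pUX2 u x2) ∧ (∑ u, ∑ x2, pUX2 u x2) = 1 ∧
    (∀ u x1, 0 ≤ pX1 u x1) ∧ (∀ u, ∑ x1, pX1 u x1 = 1) ∧
    R.1 ≤ cmiRV (jointOut ch nU pUX2 pX1)
            (fun p => p.2.1) (fun p => p.2.2.2.1) (fun p => p.2.2.1) ∧
    R.2 ≤ miRV (jointOut ch nU pUX2 pX1)
            (fun p => (p.1, p.2.2.1)) (fun p => p.2.2.2.2) ∧
    R.1 + R.2 ≤
      cmiRV (jointOut ch nU pUX2 pX1)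
          (fun p => p.2.1) (fun p => p.2.2.2.1) (fun p => (p.1, p.2.2.1))
        + miRV (jointOut ch nU pUX2 pX1)
            (fun p => (p.1, p.2.2.1)) (fun p => p.2.2.2.2)}

set_option synthInstance.maxSize 4000
set_option linter.unusedSectionVars false

theorem isCompact_convexHull_fd {E : Type} [NormedAddCommGroup E] [NormedSpace ℝ E]
    [FiniteDimensional ℝ E] {s : Set E} (hs : IsCompact s) : IsCompact (convexHull ℝ s) := by
  classical
  rcases s.eq_empty_or_nonempty with rfl | ⟨z0, hz0⟩
  · simp
  set d := Module.finrank ℝ E + 1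
  have hc : IsCompact ((stdSimplex ℝ (Fin d)) ×ˢ (Set.univ.pi fun _ : Fin d => s)) :=
    (isCompact_stdSimplex ℝ (Fin d)).prod (isCompact_univ_pi fun _ => hs)
  have hcont : Continuous (fun p : (Fin d → ℝ) × (Fin d → E) => ∑ i, p.1 i • p.2 i) := by
    fun_prop
  have := hc.image hcont
  convert this using 1
  apply Set.Subset.antisymm
  · intro x hx
    obtain ⟨ι, hι, z, w, hz, haff, hw, hw1, hsum⟩ := eq_pos_convex_span_of_mem_convexHull hx
    have hcard : Fintype.card ι ≤ Fintype.card (Fin d) := by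
      have h1 := haff.card_le_finrank_succ
      have h2 := Submodule.finrank_le (vectorSpan ℝ (Set.range z))
      simp only [Fintype.card_fin]; omega
    obtain ⟨e⟩ := Function.Embedding.nonempty_of_card_le hcard
    have key : ∀ {F : Type} [AddCommGroup F] (g : ι → F),
        ∑ i : Fin d, (if h : ∃ k, e k = i then g h.choose else 0) = ∑ k, g k := by
      intro F _ g
      rw [← Finset.sum_subset (Finset.subset_univ (Finset.univ.map e))]
      · rw [Finset.sum_map]
        refine Finset.sum_congr rfl fun k _ => ?_
        have h : ∃ k', e k' = e k := ⟨k, rfl⟩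
        rw [dif_pos h, e.injective h.choose_spec]
      · intro i _ hi
        rw [dif_neg]
        rintro ⟨k, rfl⟩
        simp at hi
    refine ⟨(fun i => if h : ∃ k, e k = i then w h.choose else 0,
      fun i => if h : ∃ k, e k = i then z h.choose else z0), ⟨⟨?_, ?_⟩, ?_⟩, ?_⟩
    · intro i
      dsimp only
      split_ifs
      · exact (hw _).le
      · exact le_rfl
    · rw [← hw1]; exact key w
    · intro i _
      dsimp only
      split_ifs
      · exact hz ⟨_, rfl⟩
      · exact hz0
    · rw [← hsum, ← key (fun k => w k • z k)]
      refine Finset.sum_congr rfl fun i _ => ?_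
      dsimp only
      split_ifs <;> simp
  · rintro _ ⟨⟨w, z⟩, ⟨⟨hw, hw1⟩, hz⟩, rfl⟩
    exact mem_convexHull_of_exists_fintype w z hw hw1 (fun i => hz i trivial) rfl

/-- Homogeneous entropy of a nonnegative vector. -/
def Hh {A : Type*} [Fintype A] (p : A → ℝ) : ℝ :=
  (∑ a, p a) * Real.logb 2 (∑ a, p a) - ∑ a, p a * Real.logb 2 (p a)

theorem Hh_eq_ent {A : Type*} [Fintype A] (p : A → ℝ) (h : ∑ a, p a = 1) : Hh p = ent p := by
  simp [Hh, ent, h]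

theorem continuous_mul_logb : Continuous fun x : ℝ => x * Real.logb 2 x := by
  have : (fun x : ℝ => x * Real.logb 2 x) = fun x => (x * Real.log x) / Real.log 2 := by
    ext x; simp [Real.logb]; ring
  rw [this]
  exact Real.continuous_mul_log.div_const _

theorem continuous_Hh {A : Type*} [Fintype A] : Continuous (Hh : (A → ℝ) → ℝ) := by
  unfold Hh
  refine Continuous.sub ?_ ?_
  · exact continuous_mul_logb.comp (by fun_prop : Continuous fun p : A → ℝ => ∑ a, p a)
  · exact continuous_finsetSum _ fun a _ => continuous_mul_logb.comp (continuous_apply a)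

theorem Hh_smul {A : Type*} [Fintype A] (c : ℝ) (p : A → ℝ) :
    Hh (fun a => c * p a) = c * Hh p := by
  rcases eq_or_ne c 0 with rfl | hc
  · simp [Hh]
  have key : ∀ x : ℝ, (c * x) * Real.logb 2 (c * x)
      = c * (x * Real.logb 2 x) + c * x * Real.logb 2 c := by
    intro x
    rcases eq_or_ne x 0 with rfl | hx
    · simp
    · rw [Real.logb_mul hc hx]; ring
  unfold Hh
  rw [← Finset.mul_sum, key]
  simp only [key]
  rw [Finset.sum_add_distrib, ← Finset.mul_sum, ← Finset.sum_mul, ← Finset.mul_sum]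
  ring

theorem gibbs {A : Type*} [Fintype A] (p r : A → ℝ) (hp : ∀ a, 0 ≤ p a) (hr : ∀ a, 0 ≤ r a)
    (hr1 : ∑ a, r a ≤ 1) (hpr : ∀ a, r a = 0 → p a = 0) :
    Hh p ≤ -∑ a, p a * Real.logb 2 (r a) := by
  have hl2 : 0 < Real.log 2 := Real.log_pos (by norm_num)
  set S := ∑ a, p a with hS
  have hS0 : 0 ≤ S := Finset.sum_nonneg fun a _ => hp a
  have key : ∀ a, p a * Real.logb 2 S - p a * Real.logb 2 (p a) + p a * Real.logb 2 (r a)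
      ≤ (r a * S - p a) / Real.log 2 := by
    intro a
    rcases (hp a).eq_or_lt with h | h
    · rw [← h]; simp
      exact div_nonneg (mul_nonneg (hr a) hS0) hl2.le
    · have hra : 0 < r a := lt_of_le_of_ne (hr a) fun h' => by
        have := hpr a h'.symm; linarith
      have hSp : 0 < S := lt_of_lt_of_le h (Finset.single_le_sum (fun b _ => hp b) (Finset.mem_univ a))
      have h1 : p a * Real.logb 2 S - p a * Real.logb 2 (p a) + p a * Real.logb 2 (r a)
          = p a * Real.log (r a * S / p a) / Real.log 2 := by
        rw [Real.log_div (by positivity) h.ne', Real.log_mul hra.ne' hSp.ne']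
        simp only [Real.logb]; ring
      rw [h1]
      gcongr
      have h2 := Real.log_le_sub_one_of_pos (show 0 < r a * S / p a by positivity)
      calc p a * Real.log (r a * S / p a) ≤ p a * (r a * S / p a - 1) := by gcongr
        _ = r a * S - p a := by field_simp
  have hsum := Finset.sum_le_sum fun a (_ : a ∈ Finset.univ) => key a
  rw [Finset.sum_add_distrib, Finset.sum_sub_distrib, ← Finset.sum_mul, ← hS,
    ← Finset.sum_div, Finset.sum_sub_distrib, ← Finset.sum_mul, ← hS] at hsum
  have h3 : ((∑ a, r a) * S - S) / Real.log 2 ≤ 0 :=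
    div_nonpos_of_nonpos_of_nonneg (by nlinarith) hl2.le
  unfold Hh
  rw [← hS]
  linarith

theorem Hh_sum_le {A J : Type*} [Fintype A] [Fintype J] (p : J → A → ℝ)
    (hp : ∀ j a, 0 ≤ p j a) : ∑ j, Hh (p j) ≤ Hh (fun a => ∑ j, p j a) := by
  set t : A → ℝ := fun a => ∑ j, p j a with ht
  have ht0 : ∀ a, 0 ≤ t a := fun a => Finset.sum_nonneg fun j _ => hp j a
  set S := ∑ a, t a with hS
  have hS0 : 0 ≤ S := Finset.sum_nonneg fun a _ => ht0 a
  have hz : ∀ a, t a = 0 → ∀ j, p j a = 0 := fun a h j =>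
    (Finset.sum_eq_zero_iff_of_nonneg (fun j _ => hp j a)).1 h j (Finset.mem_univ j)
  have hSz : ∀ a, S = 0 → t a = 0 := fun a h =>
    (Finset.sum_eq_zero_iff_of_nonneg (fun a _ => ht0 a)).1 h a (Finset.mem_univ a)
  have h1 : ∀ j, Hh (p j) ≤ -∑ a, p j a * Real.logb 2 (t a / S) := by
    intro j
    refine gibbs _ _ (hp j) (fun a => div_nonneg (ht0 a) hS0) ?_ ?_
    · rw [← Finset.sum_div]; exact div_self_le_one _
    · intro a h
      rcases div_eq_zero_iff.1 h with h | h
      · exact hz a h j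
      · exact hz a (hSz a h) j
  refine (Finset.sum_le_sum fun j _ => h1 j).trans (le_of_eq ?_)
  rw [Finset.sum_neg_distrib, Finset.sum_comm]
  simp_rw [← Finset.sum_mul]
  unfold Hh
  rw [← hS, hS, Finset.sum_mul, ← Finset.sum_sub_distrib, ← Finset.sum_neg_distrib]
  refine Finset.sum_congr rfl fun a _ => ?_
  change -(t a * _) = _
  rcases eq_or_ne (t a) 0 with h | h
  · simp [h]
  · rw [Real.logb_div h (fun h' => h (hSz a h'))]; ring

section RV
variable {Ω A B C : Type} [Fintype Ω] [Fintype A] [Fintype B] [Fintype C]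
  [DecidableEq A] [DecidableEq B] [DecidableEq C]

theorem sum_lawOf_mul (μ : Ω → ℝ) (f : Ω → A) (φ : A → ℝ) :
    ∑ a, lawOf μ f a * φ a = ∑ ω, μ ω * φ (f ω) := by
  simp only [lawOf, Finset.sum_mul]
  rw [Finset.sum_comm]
  refine Finset.sum_congr rfl fun ω _ => ?_
  simp [ite_mul]

theorem lawOf_nonneg {μ : Ω → ℝ} (hμ : ∀ ω, 0 ≤ μ ω) (f : Ω → A) (a : A) : 0 ≤ lawOf μ f a :=
  Finset.sum_nonneg fun ω _ => by split_ifs <;> simp [hμ]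

theorem sum_lawOf (μ : Ω → ℝ) (f : Ω → A) : ∑ a, lawOf μ f a = ∑ ω, μ ω := by
  simpa using sum_lawOf_mul μ f (fun _ => 1)

theorem sum_lawOf_fst (μ : Ω → ℝ) (f : Ω → A) (g : Ω → B) (b : B) :
    ∑ a, lawOf μ (fun ω => (f ω, g ω)) (a, b) = lawOf μ g b := by
  simp only [lawOf]
  rw [Finset.sum_comm]
  refine Finset.sum_congr rfl fun ω _ => ?_
  simp [Prod.mk.injEq, ite_and]

theorem entRV_congr (μ : Ω → ℝ) (f : Ω → A) (g : Ω → B)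
    (h : ∀ ω ω', f ω = f ω' ↔ g ω = g ω') : entRV μ f = entRV μ g := by
  simp only [entRV, ent, sum_lawOf_mul μ _ (fun a => Real.logb 2 (lawOf μ _ a))]
  congr 1
  refine Finset.sum_congr rfl fun ω _ => ?_
  simp only [lawOf, h]

/-- Conditional entropy. -/
def condH (μ : Ω → ℝ) (Y : Ω → A) (V : Ω → B) : ℝ :=
  entRV μ (fun ω => (Y ω, V ω)) - entRV μ V

theorem condH_eq (μ : Ω → ℝ) (Y : Ω → A) (V : Ω → B) :
    condH μ Y V = ∑ v, Hh (fun y => lawOf μ (fun ω => (Y ω, V ω)) (y, v)) := by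
  simp only [condH, entRV, ent, Hh, sum_lawOf_fst, Finset.sum_sub_distrib]
  rw [Fintype.sum_prod_type, Finset.sum_comm]
  ring

theorem condH_le (μ : Ω → ℝ) (hμ : ∀ ω, 0 ≤ μ ω) (Y : Ω → A) (V : Ω → B) (U : Ω → C)
    (h : ∀ ω ω', V ω = V ω' → U ω = U ω') : condH μ Y V ≤ condH μ Y U := by
  have h1 : condH μ Y V = condH μ Y (fun ω => (V ω, U ω)) := by
    unfold condH
    rw [entRV_congr μ (fun ω => (Y ω, V ω)) (fun ω => (Y ω, V ω, U ω)),
      entRV_congr μ V (fun ω => (V ω, U ω))]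
    · intro ω ω'; simp only [Prod.mk.injEq]; have := h ω ω'; tauto
    · intro ω ω'; simp only [Prod.mk.injEq]; have := h ω ω'; tauto
  rw [h1, condH_eq, condH_eq, Fintype.sum_prod_type, Finset.sum_comm]
  refine Finset.sum_le_sum fun u _ => ?_
  refine (Hh_sum_le _ fun j a => lawOf_nonneg hμ _ _).trans (le_of_eq ?_)
  congr 1
  ext y
  simp only [lawOf]
  rw [Finset.sum_comm]
  refine Finset.sum_congr rfl fun ω _ => ?_
  by_cases h1 : Y ω = y <;> by_cases h2 : U ω = u <;> simp [h1, h2]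

theorem fano {M : ℕ} (μ : Ω → ℝ) (hμ : ∀ ω, 0 ≤ μ ω) (hμ1 : ∑ ω, μ ω = 1)
    (f g : Ω → Fin M) (hM : 0 < M) (ε : ℝ) (hε : 0 < ε) (hε1 : ε < 1)
    (hpe : ∑ ω, μ ω * (if g ω = f ω then 0 else 1) ≤ ε) :
    condH μ f g ≤ -Real.logb 2 (1 - ε) - ε * Real.logb 2 ε + ε * Real.logb 2 M := by
  have hMr : (1:ℝ) ≤ M := by exact_mod_cast hM
  have hM0 : (0:ℝ) < M := by linarith
  have hlM : 0 ≤ Real.logb 2 M := Real.logb_nonneg (by norm_num) hMr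
  have hle : Real.logb 2 ε ≤ 0 := Real.logb_nonpos (by norm_num) hε.le hε1.le
  have hl1 : Real.logb 2 (1-ε) ≤ 0 := Real.logb_nonpos (by norm_num) (by linarith) (by linarith)
  rw [condH_eq]
  have h1 : ∀ k, Hh (fun w => lawOf μ (fun ω => (f ω, g ω)) (w, k)) ≤
      -∑ w, lawOf μ (fun ω => (f ω, g ω)) (w, k) *
        Real.logb 2 (if k = w then 1 - ε else ε / M) := by
    intro k
    refine gibbs _ _ (fun w => lawOf_nonneg hμ _ _) (fun w => ?_) ?_ (fun w h => ?_)
    · split_ifs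
      · linarith
      · positivity
    · have : ∀ w : Fin M, (if k = w then 1 - ε else ε / M) ≤
          (if k = w then 1 - ε else 0) + ε / M := by
        intro w
        have : 0 ≤ ε / M := by positivity
        split_ifs <;> linarith
      refine (Finset.sum_le_sum fun w _ => this w).trans ?_
      rw [Finset.sum_add_distrib]
      simp
      field_simp
      linarith
    · exfalso
      split_ifs at h
      · linarith
      · have : 0 < ε / M := by positivity
        linarith
  refine (Finset.sum_le_sum fun k _ => h1 k).trans ?_
  rw [Finset.sum_neg_distrib, Finset.sum_comm, ← Fintype.sum_prod_type'
    (f := fun w k => lawOf μ (fun ω => (f ω, g ω)) (w, k) *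
        Real.logb 2 (if k = w then 1 - ε else ε / M))]
  rw [sum_lawOf_mul μ (fun ω => (f ω, g ω))
    (fun p => Real.logb 2 (if p.2 = p.1 then 1 - ε else ε / M))]
  have h2 : ∀ ω, -(μ ω * Real.logb 2 (if g ω = f ω then 1 - ε else ε / M)) ≤
      μ ω * (-Real.logb 2 (1-ε)) + (μ ω * (if g ω = f ω then 0 else 1)) *
        (Real.logb 2 M - Real.logb 2 ε) := by
    intro ω
    split_ifs
    · simp
    · rw [Real.logb_div hε.ne' hM0.ne']
      nlinarith [hμ ω]
  rw [← Finset.sum_neg_distrib]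
  refine (Finset.sum_le_sum fun ω _ => h2 ω).trans ?_
  rw [Finset.sum_add_distrib, ← Finset.sum_mul, ← Finset.sum_mul, hμ1]
  nlinarith

end RV
section Region

/-- Marginal channel to receiver 1. -/
def W1 (ch : DMIFC X1 X2 Y1 Y2) (x1 : X1) (x2 : X2) (y1 : Y1) : ℝ := ∑ y2, ch.W x1 x2 y1 y2
/-- Marginal channel to receiver 2. -/
def W2 (ch : DMIFC X1 X2 Y1 Y2) (x1 : X1) (x2 : X2) (y2 : Y2) : ℝ := ∑ y1, ch.W x1 x2 y1 y2

theorem W1_nonneg (ch : DMIFC X1 X2 Y1 Y2) (x1 x2 y) : 0 ≤ W1 ch x1 x2 y :=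
  Finset.sum_nonneg fun _ _ => ch.nonneg _ _ _ _
theorem W2_nonneg (ch : DMIFC X1 X2 Y1 Y2) (x1 x2 y) : 0 ≤ W2 ch x1 x2 y :=
  Finset.sum_nonneg fun _ _ => ch.nonneg _ _ _ _
theorem W1_sum (ch : DMIFC X1 X2 Y1 Y2) (x1 x2) : ∑ y, W1 ch x1 x2 y = 1 := ch.sum_one x1 x2
theorem W2_sum (ch : DMIFC X1 X2 Y1 Y2) (x1 x2) : ∑ y, W2 ch x1 x2 y = 1 := by
  rw [← ch.sum_one x1 x2, Finset.sum_comm]; rfl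

/-- The ambient space. -/
abbrev ES (X1 X2 : Type) := (X1 → X2 → ℝ) × ℝ × ℝ

/-- Extreme points. -/
def Psi (ch : DMIFC X1 X2 Y1 Y2) (x2 : X2) (q : X1 → ℝ) : ES X1 X2 :=
  (fun x1 x2' => if x2' = x2 then q x1 else 0,
    Hh (fun y => ∑ x1, q x1 * W1 ch x1 x2 y), Hh (fun y => ∑ x1, q x1 * W2 ch x1 x2 y))

theorem continuous_Psi (ch : DMIFC X1 X2 Y1 Y2) (x2 : X2) : Continuous (Psi ch x2) := by
  unfold Psi
  refine Continuous.prodMk ?_ (Continuous.prodMk ?_ ?_)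
  · refine continuous_pi fun x1 => continuous_pi fun x2' => ?_
    split_ifs <;> fun_prop
  · exact continuous_Hh.comp (by fun_prop)
  · exact continuous_Hh.comp (by fun_prop)

theorem Psi_smul (ch : DMIFC X1 X2 Y1 Y2) (x2 : X2) (c : ℝ) (q : X1 → ℝ) :
    Psi ch x2 (fun x => c * q x) = c • Psi ch x2 q := by
  unfold Psi
  ext
  · simp
  · simp only [mul_assoc, ← Finset.mul_sum, Hh_smul]; simp
  · simp only [mul_assoc, ← Finset.mul_sum, Hh_smul]; simp

/-- The compact generating set. -/
def KK (ch : DMIFC X1 X2 Y1 Y2) : Set (ES X1 X2) := ⋃ x2, Psi ch x2 '' stdSimplex ℝ X1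

/-- Its convex hull. -/
def TT (ch : DMIFC X1 X2 Y1 Y2) : Set (ES X1 X2) := convexHull ℝ (KK ch)

theorem isCompact_TT (ch : DMIFC X1 X2 Y1 Y2) : IsCompact (TT ch) :=
  isCompact_convexHull_fd (isCompact_iUnion fun x2 =>
    (isCompact_stdSimplex ℝ X1).image (continuous_Psi ch x2))

theorem cone_mem_TT (ch : DMIFC X1 X2 Y1 Y2) {ι : Type} [Fintype ι] (x : ι → X2)
    (r : ι → X1 → ℝ) (hr : ∀ k a, 0 ≤ r k a) (hr1 : ∑ k, ∑ a, r k a = 1) :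
    ∑ k, Psi ch (x k) (r k) ∈ TT ch := by
  classical
  have hne : Nonempty X1 := by
    by_contra h
    rw [not_nonempty_iff] at h
    simp at hr1
  obtain ⟨a0⟩ := hne
  refine mem_convexHull_of_exists_fintype (fun k => ∑ a, r k a)
    (fun k => Psi ch (x k) (if ∑ a, r k a = 0 then Pi.single a0 1 else
      fun a => (∑ a, r k a)⁻¹ * r k a)) (fun k => Finset.sum_nonneg fun a _ => hr k a) hr1 ?_ ?_
  · intro k
    refine Set.mem_iUnion.2 ⟨x k, _, ?_, rfl⟩
    split_ifs with h
    · exact single_mem_stdSimplex ℝ a0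
    · refine ⟨fun a => mul_nonneg (inv_nonneg.2 (Finset.sum_nonneg fun a _ => hr k a)) (hr k a), ?_⟩
      rw [← Finset.mul_sum, inv_mul_cancel₀ h]
  · refine Finset.sum_congr rfl fun k _ => ?_
    rw [← Psi_smul]
    congr 1
    ext a
    split_ifs with h
    · rw [h, zero_mul]
      exact ((Finset.sum_eq_zero_iff_of_nonneg (fun a _ => hr k a)).1 h a (Finset.mem_univ a)).symm
    · rw [mul_inv_cancel_left₀ h]

/-- H(Y1|X2) -/
def HY1X2 (ch : DMIFC X1 X2 Y1 Y2) (p : X1 → X2 → ℝ) : ℝ :=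
  ∑ x2, Hh (fun y => ∑ x1, p x1 x2 * W1 ch x1 x2 y)
/-- H(Y1|X1,X2) -/
def LL (ch : DMIFC X1 X2 Y1 Y2) (p : X1 → X2 → ℝ) : ℝ :=
  ∑ x1, ∑ x2, p x1 x2 * Hh (W1 ch x1 x2)
/-- H(Y2) -/
def HY2 (ch : DMIFC X1 X2 Y1 Y2) (p : X1 → X2 → ℝ) : ℝ :=
  Hh (fun y => ∑ x1, ∑ x2, p x1 x2 * W2 ch x1 x2 y)

/-- The region in compact form. -/
def Rc (ch : DMIFC X1 X2 Y1 Y2) : Set (ℝ × ℝ) :=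
  {R | ∃ s ∈ TT ch, R.1 ≤ HY1X2 ch s.1 - LL ch s.1 ∧ R.2 ≤ HY2 ch s.1 - s.2.2 ∧
    R.1 + R.2 ≤ s.2.1 - LL ch s.1 + (HY2 ch s.1 - s.2.2)}

theorem isClosed_Rc (ch : DMIFC X1 X2 Y1 Y2) : IsClosed (Rc ch) := by
  have c1 : Continuous (HY1X2 ch) := by
    unfold HY1X2
    exact continuous_finsetSum _ fun x2 _ => continuous_Hh.comp (by fun_prop)
  have c2 : Continuous (LL ch) := by unfold LL; fun_prop
  have c3 : Continuous (HY2 ch) := by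
    unfold HY2
    exact continuous_Hh.comp (by fun_prop)
  have : CompactSpace (TT ch) := isCompact_iff_compactSpace.1 (isCompact_TT ch)
  have hC : IsClosed {z : (ℝ × ℝ) × TT ch | z.1.1 ≤ HY1X2 ch z.2.1.1 - LL ch z.2.1.1 ∧
      z.1.2 ≤ HY2 ch z.2.1.1 - z.2.1.2.2 ∧
      z.1.1 + z.1.2 ≤ z.2.1.2.1 - LL ch z.2.1.1 + (HY2 ch z.2.1.1 - z.2.1.2.2)} := by
    refine IsClosed.inter (isClosed_le (f := fun z : (ℝ × ℝ) × TT ch => z.1.1)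
      (g := fun z => HY1X2 ch z.2.1.1 - LL ch z.2.1.1) (by fun_prop) (by fun_prop))
      (IsClosed.inter (isClosed_le (f := fun z : (ℝ × ℝ) × TT ch => z.1.2)
      (g := fun z => HY2 ch z.2.1.1 - z.2.1.2.2) (by fun_prop) (by fun_prop))
      (isClosed_le (f := fun z : (ℝ × ℝ) × TT ch => z.1.1 + z.1.2)
      (g := fun z => z.2.1.2.1 - LL ch z.2.1.1 + (HY2 ch z.2.1.1 - z.2.1.2.2))
      (by fun_prop) (by fun_prop)))
  have := isClosedMap_fst_of_compactSpace _ hC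
  convert this using 1
  ext R
  constructor
  · rintro ⟨s, hs, h⟩
    exact ⟨(R, ⟨s, hs⟩), h, rfl⟩
  · rintro ⟨⟨R', s, hs⟩, h, rfl⟩
    exact ⟨s, hs, h⟩

theorem law_joint1 (ch : DMIFC X1 X2 Y1 Y2) {C : Type} [DecidableEq C] (N : ℕ)
    (P : Fin N → X2 → ℝ) (q : Fin N → X1 → ℝ) (g : Fin N × X1 × X2 → C) (y : Y1) (c : C) :
    lawOf (jointOut ch N P q) (fun p => (p.2.2.2.1, g (p.1, p.2.1, p.2.2.1))) (y, c) =
      ∑ u, ∑ x1, ∑ x2, if g (u, x1, x2) = c then P u x2 * q u x1 * W1 ch x1 x2 y else 0 := by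
  simp only [lawOf, jointOut, Fintype.sum_prod_type, Prod.mk.injEq, ite_and, W1]
  refine Finset.sum_congr rfl fun u _ => Finset.sum_congr rfl fun x1 _ =>
    Finset.sum_congr rfl fun x2 _ => ?_
  rw [Finset.sum_comm]
  by_cases h : g (u, x1, x2) = c <;> simp [h, Finset.mul_sum]

theorem law_joint2 (ch : DMIFC X1 X2 Y1 Y2) {C : Type} [DecidableEq C] (N : ℕ)
    (P : Fin N → X2 → ℝ) (q : Fin N → X1 → ℝ) (g : Fin N × X1 × X2 → C) (y : Y2) (c : C) :
    lawOf (jointOut ch N P q) (fun p => (p.2.2.2.2, g (p.1, p.2.1, p.2.2.1))) (y, c) =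
      ∑ u, ∑ x1, ∑ x2, if g (u, x1, x2) = c then P u x2 * q u x1 * W2 ch x1 x2 y else 0 := by
  simp only [lawOf, jointOut, Fintype.sum_prod_type, Prod.mk.injEq, ite_and, W2]
  refine Finset.sum_congr rfl fun u _ => Finset.sum_congr rfl fun x1 _ =>
    Finset.sum_congr rfl fun x2 _ => ?_
  by_cases h : g (u, x1, x2) = c <;> simp [h, Finset.mul_sum]

theorem law_joint2' (ch : DMIFC X1 X2 Y1 Y2) (N : ℕ)
    (P : Fin N → X2 → ℝ) (q : Fin N → X1 → ℝ) (y : Y2) :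
    lawOf (jointOut ch N P q) (fun p => p.2.2.2.2) y =
      ∑ u, ∑ x1, ∑ x2, P u x2 * q u x1 * W2 ch x1 x2 y := by
  simp only [lawOf, jointOut, Fintype.sum_prod_type, W2]
  refine Finset.sum_congr rfl fun u _ => Finset.sum_congr rfl fun x1 _ =>
    Finset.sum_congr rfl fun x2 _ => ?_
  simp [Finset.mul_sum]

theorem Rc_subset_Ro (ch : DMIFC X1 X2 Y1 Y2) : Rc ch ⊆ Ro ch := by
  classical
  rintro R ⟨s, hs, h1, h2, h3⟩
  obtain ⟨ι, _, w, z, hw, hw1, hz, hsum⟩ := mem_convexHull_iff_exists_fintype.1 hs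
  have hz' : ∀ k, ∃ x2 : X2, ∃ q ∈ stdSimplex ℝ X1, Psi ch x2 q = z k := fun k => by
    obtain ⟨x2, hx⟩ := Set.mem_iUnion.1 (hz k)
    exact ⟨x2, hx⟩
  choose x q hq hPsi using hz'
  obtain ⟨N, ⟨e⟩⟩ : ∃ N, Nonempty (Fin N ≃ ι) := ⟨_, ⟨(Fintype.equivFin ι).symm⟩⟩
  -- reindexed
  have hsum' : ∑ u, w (e u) • Psi ch (x (e u)) (q (e u)) = s := by
    rw [← hsum, ← e.sum_comp (fun i => w i • z i)]
    simp only [hPsi]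
  have hw1' : ∑ u, w (e u) = 1 := by rw [← hw1]; exact e.sum_comp w
  obtain ⟨w', hw'⟩ : ∃ w', w' = fun u => w (e u) := ⟨_, rfl⟩
  obtain ⟨x', hx'⟩ : ∃ x', x' = fun u => x (e u) := ⟨_, rfl⟩
  obtain ⟨q', hq'⟩ : ∃ q', q' = fun u => q (e u) := ⟨_, rfl⟩
  have hw0 : ∀ u, 0 ≤ w' u := fun u => by rw [hw']; exact hw _
  have hw1 : ∑ u, w' u = 1 := by rw [hw']; exact hw1'
  have hqq : ∀ u, q' u ∈ stdSimplex ℝ X1 := fun u => by rw [hq']; exact hq _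
  have hs' : ∑ u, w' u • Psi ch (x' u) (q' u) = s := by rw [hw', hx', hq']; exact hsum'
  clear hsum' hw1' hPsi hz hsum hw
  have hp : ∀ a b, s.1 a b = ∑ u, w' u * (if b = x' u then q' u a else 0) := by
    intro a b
    rw [← hs']
    simp [Prod.fst_sum, Psi]
  have hh1 : s.2.1 = ∑ u, w' u * Hh (fun y => ∑ x1, q' u x1 * W1 ch x1 (x' u) y) := by
    rw [← hs']
    simp [Prod.fst_sum, Prod.snd_sum, Psi]
  have hh2 : s.2.2 = ∑ u, w' u * Hh (fun y => ∑ x1, q' u x1 * W2 ch x1 (x' u) y) := by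
    rw [← hs']
    simp [Prod.snd_sum, Psi]
  let P : Fin N → X2 → ℝ := fun u b => if b = x' u then w' u else 0
  set μ := jointOut ch N P q' with hμ
  have e1 : condH μ (fun p => p.2.2.2.1) (fun p => p.2.2.1) = HY1X2 ch s.1 := by
    rw [condH_eq, HY1X2]
    refine Finset.sum_congr rfl fun b _ => ?_
    congr 1
    ext y
    rw [law_joint1 ch N P q' (fun t => t.2.2), Finset.sum_comm]
    refine Finset.sum_congr rfl fun x1 _ => ?_
    rw [hp, Finset.sum_mul]
    refine Finset.sum_congr rfl fun u _ => ?_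
    simp [P]
  have e2 : condH μ (fun p => p.2.2.2.1) (fun p => (p.2.1, p.2.2.1)) = LL ch s.1 := by
    rw [condH_eq, LL, Fintype.sum_prod_type]
    refine Finset.sum_congr rfl fun a _ => Finset.sum_congr rfl fun b _ => ?_
    rw [← Hh_smul]
    congr 1
    ext y
    rw [law_joint1 ch N P q' (fun t => (t.2.1, t.2.2)), hp, Finset.sum_mul]
    refine Finset.sum_congr rfl fun u _ => ?_
    simp [P, ite_and]
  have e3 : condH μ (fun p => p.2.2.2.1) (fun p => (p.1, p.2.2.1)) = s.2.1 := by
    rw [condH_eq, hh1, Fintype.sum_prod_type]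
    refine Finset.sum_congr rfl fun u _ => ?_
    rw [Finset.sum_eq_single (x' u)]
    · rw [← Hh_smul]
      congr 1
      ext y
      rw [law_joint1 ch N P q' (fun t => (t.1, t.2.2)), Finset.sum_eq_single u]
      · rw [Finset.mul_sum]
        refine Finset.sum_congr rfl fun x1 _ => ?_
        simp [P, mul_assoc]
      · intro u' _ h; simp [h]
      · simp
    · intro b _ hb
      have : (fun y => lawOf μ (fun p => (p.2.2.2.1, (p.1, p.2.2.1))) (y, (u, b))) =
          fun y => 0 * 0 := by
        ext y
        rw [law_joint1 ch N P q' (fun t => (t.1, t.2.2))]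
        simp [P, ite_and, hb]
      rw [this, Hh_smul, zero_mul]
    · simp
  have e4 : condH μ (fun p => p.2.2.2.1) (fun p => (p.2.1, (p.1, p.2.2.1))) = LL ch s.1 := by
    rw [condH_eq, LL, Fintype.sum_prod_type]
    refine Finset.sum_congr rfl fun a _ => ?_
    rw [Fintype.sum_prod_type, Finset.sum_comm]
    refine Finset.sum_congr rfl fun b _ => ?_
    rw [hp, Finset.sum_mul]
    refine Finset.sum_congr rfl fun u _ => ?_
    rw [← Hh_smul]
    congr 1
    ext y
    rw [law_joint1 ch N P q' (fun t => (t.2.1, (t.1, t.2.2)))]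
    simp [P, ite_and]
  have e5 : condH μ (fun p => p.2.2.2.2) (fun p => (p.1, p.2.2.1)) = s.2.2 := by
    rw [condH_eq, hh2, Fintype.sum_prod_type]
    refine Finset.sum_congr rfl fun u _ => ?_
    rw [Finset.sum_eq_single (x' u)]
    · rw [← Hh_smul]
      congr 1
      ext y
      rw [law_joint2 ch N P q' (fun t => (t.1, t.2.2)), Finset.sum_eq_single u]
      · rw [Finset.mul_sum]
        refine Finset.sum_congr rfl fun x1 _ => ?_
        simp [P, mul_assoc]
      · intro u' _ h; simp [h]
      · simp
    · intro b _ hb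
      have : (fun y => lawOf μ (fun p => (p.2.2.2.2, (p.1, p.2.2.1))) (y, (u, b))) =
          fun y => 0 * 0 := by
        ext y
        rw [law_joint2 ch N P q' (fun t => (t.1, t.2.2))]
        simp [P, ite_and, hb]
      rw [this, Hh_smul, zero_mul]
    · simp
  have e6 : entRV μ (fun p => p.2.2.2.2) = HY2 ch s.1 := by
    have hl : lawOf μ (fun p => p.2.2.2.2) =
        fun y => ∑ x1, ∑ x2, s.1 x1 x2 * W2 ch x1 x2 y := by
      ext y
      rw [law_joint2', Finset.sum_comm]
      refine Finset.sum_congr rfl fun x1 _ => ?_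
      rw [Finset.sum_comm]
      refine Finset.sum_congr rfl fun x2 _ => ?_
      rw [hp, Finset.sum_mul]
      refine Finset.sum_congr rfl fun u _ => ?_
      simp only [P]
      split_ifs <;> simp
    rw [entRV, HY2, hl, Hh_eq_ent]
    rw [Finset.sum_comm]
    have : ∀ x1, ∑ y, ∑ x2, s.1 x1 x2 * W2 ch x1 x2 y = ∑ x2, s.1 x1 x2 := by
      intro x1
      rw [Finset.sum_comm]
      simp [← Finset.mul_sum, W2_sum]
    simp only [this]
    simp only [hp]
    calc ∑ a, ∑ b, ∑ u, w' u * (if b = x' u then q' u a else 0)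
        = ∑ a, ∑ u, w' u * q' u a := by
          refine Finset.sum_congr rfl fun a _ => ?_
          rw [Finset.sum_comm]
          simp
      _ = 1 := by
          rw [Finset.sum_comm]
          simp [← Finset.mul_sum, (hqq _).2, hw1]
  refine ⟨N, P, q', ?_, ?_, fun u => (hqq u).1, fun u => (hqq u).2, ?_, ?_, ?_⟩
  · intro u b; simp only [P]; split_ifs <;> simp [hw0]
  · simp [P, hw1]
  all_goals rw [← hμ]
  · refine h1.trans (le_of_eq ?_)
    rw [← e1, ← e2]
    simp only [condH, cmiRV]
    rw [entRV_congr μ (fun p => (p.2.1, p.2.2.2.1, p.2.2.1)) (fun p => (p.2.2.2.1, (p.2.1, p.2.2.1)))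
      (by intros; simp only [Prod.mk.injEq]; tauto)]
    ring
  · refine h2.trans (le_of_eq ?_)
    rw [← e5, ← e6]
    simp only [condH, miRV]
    rw [entRV_congr μ (fun p => ((p.1, p.2.2.1), p.2.2.2.2)) (fun p => (p.2.2.2.2, (p.1, p.2.2.1)))
      (by intros; simp only [Prod.mk.injEq]; tauto)]
    ring
  · refine h3.trans (le_of_eq ?_)
    rw [← e3, ← e4, ← e5, ← e6]
    simp only [condH, miRV, cmiRV]
    rw [entRV_congr μ (fun p => ((p.1, p.2.2.1), p.2.2.2.2)) (fun p => (p.2.2.2.2, (p.1, p.2.2.1)))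
      (by intros; simp only [Prod.mk.injEq]; tauto),
      entRV_congr μ (fun p => (p.2.1, p.2.2.2.1, (p.1, p.2.2.1)))
        (fun p => (p.2.2.2.1, (p.2.1, (p.1, p.2.2.1))))
      (by intros; simp only [Prod.mk.injEq]; tauto)]
    ring
end Region
section Converse

theorem logb_uniform {Ω A : Type} [Fintype Ω] [Fintype A] [DecidableEq A] (μ : Ω → ℝ) (f : Ω → A)
    (m : ℝ) (hm : 0 < m) (hA : (Fintype.card A : ℝ) = m) (h : ∀ a, lawOf μ f a = 1 / m) :
    entRV μ f = Real.logb 2 m := by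
  simp only [entRV, ent, h]
  rw [Finset.sum_const, Finset.card_univ, nsmul_eq_mul, hA]
  simp only [one_div, Real.logb_inv]
  field_simp

/-- Prefix mask. -/
def ml {A : Type} {n : ℕ} (k : ℕ) (z : Fin n → A) : Fin n → Option A :=
  fun j => if (j : ℕ) < k then some (z j) else none
/-- Suffix mask. -/
def mg {A : Type} {n : ℕ} (k : ℕ) (z : Fin n → A) : Fin n → Option A :=
  fun j => if k ≤ (j : ℕ) then some (z j) else none

theorem ml_eq {A : Type} {n : ℕ} (k : ℕ) (z z' : Fin n → A) :
    ml k z = ml k z' ↔ ∀ j : Fin n, (j : ℕ) < k → z j = z' j := by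
  simp only [ml, funext_iff]
  refine forall_congr' fun j => ?_
  split_ifs with h <;> simp [h]
theorem mg_eq {A : Type} {n : ℕ} (k : ℕ) (z z' : Fin n → A) :
    mg k z = mg k z' ↔ ∀ j : Fin n, k ≤ (j : ℕ) → z j = z' j := by
  simp only [mg, funext_iff]
  refine forall_congr' fun j => ?_
  split_ifs with h <;> simp [h]
theorem ml_succ {A : Type} {n : ℕ} (i : Fin n) (z z' : Fin n → A) :
    ml ((i : ℕ) + 1) z = ml ((i : ℕ) + 1) z' ↔ z i = z' i ∧ ml i z = ml i z' := by
  simp only [ml_eq]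
  constructor
  · intro h
    exact ⟨h i (by omega), fun j hj => h j (by omega)⟩
  · rintro ⟨h1, h2⟩ j hj
    rcases eq_or_ne j i with rfl | hne
    · exact h1
    · exact h2 j (by have := Fin.val_ne_of_ne hne; omega)
theorem mg_succ {A : Type} {n : ℕ} (i : Fin n) (z z' : Fin n → A) :
    mg i z = mg i z' ↔ z i = z' i ∧ mg ((i : ℕ) + 1) z = mg ((i : ℕ) + 1) z' := by
  simp only [mg_eq]
  constructor
  · intro h
    exact ⟨h i le_rfl, fun j hj => h j (by omega)⟩
  · rintro ⟨h1, h2⟩ j hj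
    rcases eq_or_ne j i with rfl | hne
    · exact h1
    · exact h2 j (by have := Fin.val_ne_of_ne hne; omega)
theorem ml_zero {A : Type} {n : ℕ} (z z' : Fin n → A) : ml 0 z = ml 0 z' := by
  simp [ml_eq]
theorem ml_full {A : Type} {n : ℕ} (z z' : Fin n → A) : ml n z = ml n z' ↔ z = z' := by
  rw [ml_eq]; simp [funext_iff]
theorem mg_zero {A : Type} {n : ℕ} (z z' : Fin n → A) : mg 0 z = mg 0 z' ↔ z = z' := by
  rw [mg_eq]; simp [funext_iff]
theorem mg_full {A : Type} {n : ℕ} (z z' : Fin n → A) : mg n z = mg n z' := by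
  rw [mg_eq]; intro j hj; have := j.2; omega
theorem ml_update {A : Type} {n : ℕ} (i : Fin n) (z : Fin n → A) (a : A) :
    ml i (Function.update z i a) = ml i z := by
  rw [ml_eq]; intro j hj
  exact Function.update_of_ne (fun h => by rw [h] at hj; omega) _ _
theorem mg_update {A : Type} {n : ℕ} (i : Fin n) (z : Fin n → A) (a : A) :
    mg ((i : ℕ) + 1) (Function.update z i a) = mg ((i : ℕ) + 1) z := by
  rw [mg_eq]; intro j hj
  exact Function.update_of_ne (fun h => by rw [h] at hj; omega) _ _

theorem chain {Ω A B : Type} [Fintype Ω] [Fintype A] [Fintype B] [DecidableEq A] [DecidableEq B]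
    {n : ℕ} (μ : Ω → ℝ) (Z : Ω → Fin n → A) (V : Ω → B) :
    condH μ Z V = ∑ i : Fin n, condH μ (fun ω => Z ω i) (fun ω => (ml i (Z ω), V ω)) := by
  have h : ∀ i : Fin n, condH μ (fun ω => Z ω i) (fun ω => (ml i (Z ω), V ω)) =
      (fun k : ℕ => entRV μ (fun ω => (ml (k + 1) (Z ω), V ω)) -
        entRV μ (fun ω => (ml k (Z ω), V ω))) i := by
    intro i
    simp only [condH]
    congr 1
    refine entRV_congr μ _ _ fun ω ω' => ?_
    simp only [Prod.mk.injEq, ml_succ]; tauto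
  simp only [h]
  rw [Fin.sum_univ_eq_sum_range (fun k : ℕ => entRV μ (fun ω => (ml (k + 1) (Z ω), V ω)) -
        entRV μ (fun ω => (ml k (Z ω), V ω))) n,
    Finset.sum_range_sub (fun k : ℕ => entRV μ (fun ω => (ml k (Z ω), V ω)))]
  simp only [condH]
  congr 1
  · refine entRV_congr μ _ _ fun ω ω' => ?_
    simp only [Prod.mk.injEq, ml_full]
  · refine entRV_congr μ _ _ fun ω ω' => ?_
    simp only [Prod.mk.injEq, true_and, ml_zero (Z ω) (Z ω')]

theorem csiszar {Ω A A' B C : Type} [Fintype Ω] [Fintype A] [Fintype A'] [Fintype B] [Fintype C]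
    [DecidableEq A] [DecidableEq A'] [DecidableEq B] [DecidableEq C]
    {n : ℕ} (μ : Ω → ℝ) (Z : Ω → Fin n → A) (Z' : Ω → Fin n → A') (V : Ω → B)
    (X : Fin n → Ω → C) (hX : ∀ i ω ω', V ω = V ω' → X i ω = X i ω') :
    ∑ i : Fin n, (condH μ (fun ω => Z ω i) (fun ω => (X i ω, (V ω, ml i (Z' ω), mg (i + 1) (Z ω))))
      - condH μ (fun ω => Z' ω i) (fun ω => (X i ω, (V ω, ml i (Z' ω), mg (i + 1) (Z ω)))))
    = condH μ Z V - condH μ Z' V := by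
  have h : ∀ i : Fin n,
      (condH μ (fun ω => Z ω i) (fun ω => (X i ω, (V ω, ml i (Z' ω), mg (i + 1) (Z ω))))
      - condH μ (fun ω => Z' ω i) (fun ω => (X i ω, (V ω, ml i (Z' ω), mg (i + 1) (Z ω)))))
      = (fun k : ℕ => entRV μ (fun ω => (V ω, ml k (Z' ω), mg k (Z ω))) -
        entRV μ (fun ω => (V ω, ml (k + 1) (Z' ω), mg (k + 1) (Z ω)))) i := by
    intro i
    simp only [condH]
    rw [sub_sub_sub_cancel_right]
    congr 1
    · refine entRV_congr μ _ _ fun ω ω' => ?_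
      have := hX i ω ω'
      simp only [Prod.mk.injEq, mg_succ i]; tauto
    · refine entRV_congr μ _ _ fun ω ω' => ?_
      have := hX i ω ω'
      simp only [Prod.mk.injEq, ml_succ]; tauto
  simp only [h]
  rw [Fin.sum_univ_eq_sum_range (fun k : ℕ =>
      entRV μ (fun ω => (V ω, ml k (Z' ω), mg k (Z ω))) -
        entRV μ (fun ω => (V ω, ml (k + 1) (Z' ω), mg (k + 1) (Z ω)))) n,
    Finset.sum_range_sub' (fun k : ℕ => entRV μ (fun ω => (V ω, ml k (Z' ω), mg k (Z ω))))]
  simp only [condH]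
  rw [sub_sub_sub_cancel_right]
  congr 1
  · refine entRV_congr μ _ _ fun ω ω' => ?_
    simp only [Prod.mk.injEq, mg_zero, ml_zero (Z' ω) (Z' ω')]; tauto
  · refine entRV_congr μ _ _ fun ω ω' => ?_
    simp only [Prod.mk.injEq, ml_full, mg_full (Z ω) (Z ω')]; tauto

/-- Sample space of the code. -/
abbrev Om (n M1 M2 : ℕ) (Y1 Y2 : Type) := Fin M1 × Fin M2 × (Fin n → Y1) × (Fin n → Y2)

variable {n M1 M2 : ℕ}

/-- The joint law induced by a code. -/
def muC (ch : DMIFC X1 X2 Y1 Y2) (f1 : Fin M1 → Fin M2 → Fin n → X1) (f2 : Fin M2 → Fin n → X2)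
    (ω : Om n M1 M2 Y1 Y2) : ℝ :=
  (1 / (M1 * M2) : ℝ) * ∏ i, ch.W (f1 ω.1 ω.2.1 i) (f2 ω.2.1 i) (ω.2.2.1 i) (ω.2.2.2 i)

/-- Change coordinate i of the outputs. -/
def upd (i : Fin n) (ω : Om n M1 M2 Y1 Y2) (c : Y1 × Y2) : Om n M1 M2 Y1 Y2 :=
  (ω.1, ω.2.1, Function.update ω.2.2.1 i c.1, Function.update ω.2.2.2 i c.2)

theorem muC_nonneg (ch : DMIFC X1 X2 Y1 Y2) (f1 : Fin M1 → Fin M2 → Fin n → X1)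
    (f2 : Fin M2 → Fin n → X2) (ω) : 0 ≤ muC ch f1 f2 ω :=
  mul_nonneg (by positivity) (Finset.prod_nonneg fun _ _ => ch.nonneg _ _ _ _)

theorem muC_upd (ch : DMIFC X1 X2 Y1 Y2) (f1 : Fin M1 → Fin M2 → Fin n → X1)
    (f2 : Fin M2 → Fin n → X2) (i : Fin n) (ω) (c : Y1 × Y2) :
    muC ch f1 f2 (upd i ω c) *
      ch.W (f1 ω.1 ω.2.1 i) (f2 ω.2.1 i) (ω.2.2.1 i) (ω.2.2.2 i) =
    muC ch f1 f2 ω * ch.W (f1 ω.1 ω.2.1 i) (f2 ω.2.1 i) c.1 c.2 := by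
  have h : ∀ ω' : Om n M1 M2 Y1 Y2, muC ch f1 f2 ω' = (1 / (M1 * M2) : ℝ) *
      (ch.W (f1 ω'.1 ω'.2.1 i) (f2 ω'.2.1 i) (ω'.2.2.1 i) (ω'.2.2.2 i) *
      ∏ j ∈ Finset.univ.erase i,
        ch.W (f1 ω'.1 ω'.2.1 j) (f2 ω'.2.1 j) (ω'.2.2.1 j) (ω'.2.2.2 j)) := by
    intro ω'
    rw [Finset.mul_prod_erase Finset.univ (fun j =>
      ch.W (f1 ω'.1 ω'.2.1 j) (f2 ω'.2.1 j) (ω'.2.2.1 j) (ω'.2.2.2 j)) (Finset.mem_univ i)]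
    rfl
  rw [h, h]
  have h2 : ∏ j ∈ Finset.univ.erase i, ch.W (f1 (upd i ω c).1 (upd i ω c).2.1 j)
        (f2 (upd i ω c).2.1 j) ((upd i ω c).2.2.1 j) ((upd i ω c).2.2.2 j) =
      ∏ j ∈ Finset.univ.erase i, ch.W (f1 ω.1 ω.2.1 j) (f2 ω.2.1 j) (ω.2.2.1 j) (ω.2.2.2 j) := by
    refine Finset.prod_congr rfl fun j hj => ?_
    have hj := (Finset.mem_erase.1 hj).1
    simp [upd, hj]
  rw [h2]
  simp only [upd, Function.update_self]
  ring

theorem factor (ch : DMIFC X1 X2 Y1 Y2) (f1 : Fin M1 → Fin M2 → Fin n → X1)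
    (f2 : Fin M2 → Fin n → X2) (i : Fin n) (φ : Om n M1 M2 Y1 Y2 → ℝ)
    (hφ : ∀ ω c, φ (upd i ω c) = φ ω) (ψ : Y1 × Y2 → ℝ) :
    ∑ ω, muC ch f1 f2 ω * φ ω * ψ (ω.2.2.1 i, ω.2.2.2 i) =
    ∑ ω, muC ch f1 f2 ω * φ ω *
      ∑ c : Y1 × Y2, ch.W (f1 ω.1 ω.2.1 i) (f2 ω.2.1 i) c.1 c.2 * ψ c := by
  let T : Om n M1 M2 Y1 Y2 × (Y1 × Y2) → Om n M1 M2 Y1 Y2 × (Y1 × Y2) :=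
    fun z => (upd i z.1 z.2, (z.1.2.2.1 i, z.1.2.2.2 i))
  have hT : Function.Involutive T := by
    rintro ⟨⟨w1, w2, y1, y2⟩, ⟨a, b⟩⟩
    simp [T, upd]
  symm
  calc ∑ ω, muC ch f1 f2 ω * φ ω *
      ∑ c : Y1 × Y2, ch.W (f1 ω.1 ω.2.1 i) (f2 ω.2.1 i) c.1 c.2 * ψ c
      = ∑ z : Om n M1 M2 Y1 Y2 × (Y1 × Y2), muC ch f1 f2 z.1 * φ z.1 *
        (ch.W (f1 z.1.1 z.1.2.1 i) (f2 z.1.2.1 i) z.2.1 z.2.2 * ψ z.2) := by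
        rw [Fintype.sum_prod_type (α₁ := Om n M1 M2 Y1 Y2)]
        exact Finset.sum_congr rfl fun ω _ => Finset.mul_sum _ _ _
    _ = ∑ z : Om n M1 M2 Y1 Y2 × (Y1 × Y2), muC ch f1 f2 (T z).1 * φ (T z).1 *
        (ch.W (f1 (T z).1.1 (T z).1.2.1 i) (f2 (T z).1.2.1 i) (T z).2.1 (T z).2.2 * ψ (T z).2) :=
        (Equiv.sum_comp hT.toPerm (fun z => muC ch f1 f2 z.1 * φ z.1 *
        (ch.W (f1 z.1.1 z.1.2.1 i) (f2 z.1.2.1 i) z.2.1 z.2.2 * ψ z.2))).symm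
    _ = ∑ z : Om n M1 M2 Y1 Y2 × (Y1 × Y2), muC ch f1 f2 z.1 * φ z.1 *
        ψ (z.1.2.2.1 i, z.1.2.2.2 i) * ch.W (f1 z.1.1 z.1.2.1 i) (f2 z.1.2.1 i) z.2.1 z.2.2 := by
        refine Finset.sum_congr rfl fun z _ => ?_
        simp only [T, hφ]
        have := muC_upd ch f1 f2 i z.1 z.2
        calc _ = (muC ch f1 f2 (upd i z.1 z.2) *
            ch.W (f1 z.1.1 z.1.2.1 i) (f2 z.1.2.1 i) (z.1.2.2.1 i) (z.1.2.2.2 i)) *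
            (φ z.1 * ψ (z.1.2.2.1 i, z.1.2.2.2 i)) := by simp only [upd]; ring
          _ = _ := by rw [this]; ring
    _ = _ := by
        rw [Fintype.sum_prod_type]
        refine Finset.sum_congr rfl fun ω _ => ?_
        dsimp only
        rw [← Finset.mul_sum, Fintype.sum_prod_type, ch.sum_one, mul_one]

theorem sum_W1 (ch : DMIFC X1 X2 Y1 Y2) (x1 x2) (y : Y1) :
    ∑ c : Y1 × Y2, ch.W x1 x2 c.1 c.2 * (if c.1 = y then 1 else 0) = W1 ch x1 x2 y := by
  rw [Fintype.sum_prod_type, Finset.sum_comm]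
  simp [W1]
theorem sum_W2 (ch : DMIFC X1 X2 Y1 Y2) (x1 x2) (y : Y2) :
    ∑ c : Y1 × Y2, ch.W x1 x2 c.1 c.2 * (if c.2 = y then 1 else 0) = W2 ch x1 x2 y := by
  rw [Fintype.sum_prod_type]
  simp [W2]

theorem lawG (ch : DMIFC X1 X2 Y1 Y2) (f1 : Fin M1 → Fin M2 → Fin n → X1)
    (f2 : Fin M2 → Fin n → X2) (i : Fin n) {B : Type} [DecidableEq B]
    (V : Om n M1 M2 Y1 Y2 → B) (hV : ∀ ω c, V (upd i ω c) = V ω) (ψ : Y1 × Y2 → ℝ)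
    (b : X2) (v : B) :
    ∑ ω, muC ch f1 f2 ω * (if f2 ω.2.1 i = b ∧ V ω = v then 1 else 0) *
        ψ (ω.2.2.1 i, ω.2.2.2 i) =
    ∑ x1, lawOf (muC ch f1 f2) (fun ω => (f1 ω.1 ω.2.1 i, (f2 ω.2.1 i, V ω))) (x1, (b, v)) *
      ∑ c : Y1 × Y2, ch.W x1 b c.1 c.2 * ψ c := by
  rw [factor]
  · simp only [lawOf, Finset.sum_mul]
    rw [Finset.sum_comm]
    refine Finset.sum_congr rfl fun ω _ => ?_
    rw [Finset.sum_eq_single (f1 ω.1 ω.2.1 i)]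
    · simp only [Prod.mk.injEq, true_and]
      split_ifs with h
      · rw [h.1]; ring
      · simp
    · intro x1 _ hx
      simp [hx.symm]
    · simp
  · intro ω c
    rw [hV]; rfl

theorem lawG1 (ch : DMIFC X1 X2 Y1 Y2) (f1 : Fin M1 → Fin M2 → Fin n → X1)
    (f2 : Fin M2 → Fin n → X2) (i : Fin n) {B : Type} [DecidableEq B]
    (V : Om n M1 M2 Y1 Y2 → B) (hV : ∀ ω c, V (upd i ω c) = V ω) (y : Y1) (b : X2) (v : B) :
    lawOf (muC ch f1 f2) (fun ω => (ω.2.2.1 i, (f2 ω.2.1 i, V ω))) (y, (b, v)) =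
    ∑ x1, lawOf (muC ch f1 f2) (fun ω => (f1 ω.1 ω.2.1 i, (f2 ω.2.1 i, V ω))) (x1, (b, v)) *
      W1 ch x1 b y := by
  have := lawG ch f1 f2 i V hV (fun c => if c.1 = y then 1 else 0) b v
  simp only [sum_W1] at this
  rw [← this]
  refine Finset.sum_congr rfl fun ω _ => ?_
  by_cases h1 : ω.2.2.1 i = y <;> simp [h1]

theorem lawG2 (ch : DMIFC X1 X2 Y1 Y2) (f1 : Fin M1 → Fin M2 → Fin n → X1)
    (f2 : Fin M2 → Fin n → X2) (i : Fin n) {B : Type} [DecidableEq B]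
    (V : Om n M1 M2 Y1 Y2 → B) (hV : ∀ ω c, V (upd i ω c) = V ω) (y : Y2) (b : X2) (v : B) :
    lawOf (muC ch f1 f2) (fun ω => (ω.2.2.2 i, (f2 ω.2.1 i, V ω))) (y, (b, v)) =
    ∑ x1, lawOf (muC ch f1 f2) (fun ω => (f1 ω.1 ω.2.1 i, (f2 ω.2.1 i, V ω))) (x1, (b, v)) *
      W2 ch x1 b y := by
  have := lawG ch f1 f2 i V hV (fun c => if c.2 = y then 1 else 0) b v
  simp only [sum_W2] at this
  rw [← this]
  refine Finset.sum_congr rfl fun ω _ => ?_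
  by_cases h1 : ω.2.2.2 i = y <;> simp [h1]

/-- Input law at time i. -/
def pin (ch : DMIFC X1 X2 Y1 Y2) (f1 : Fin M1 → Fin M2 → Fin n → X1)
    (f2 : Fin M2 → Fin n → X2) (i : Fin n) (x1 : X1) (x2 : X2) : ℝ :=
  lawOf (muC ch f1 f2) (fun ω => (f1 ω.1 ω.2.1 i, f2 ω.2.1 i)) (x1, x2)

/-- Time-averaged input law. -/
def pbar (ch : DMIFC X1 X2 Y1 Y2) (f1 : Fin M1 → Fin M2 → Fin n → X1)
    (f2 : Fin M2 → Fin n → X2) (x1 : X1) (x2 : X2) : ℝ :=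
  ∑ i, (n : ℝ)⁻¹ * pin ch f1 f2 i x1 x2

theorem pin_nonneg (ch : DMIFC X1 X2 Y1 Y2) (f1 : Fin M1 → Fin M2 → Fin n → X1)
    (f2 : Fin M2 → Fin n → X2) (i x1 x2) : 0 ≤ pin ch f1 f2 i x1 x2 :=
  lawOf_nonneg (muC_nonneg ch f1 f2) _ _

theorem sum_law_msg (ch : DMIFC X1 X2 Y1 Y2) (f1 : Fin M1 → Fin M2 → Fin n → X1)
    (f2 : Fin M2 → Fin n → X2) (w1 : Fin M1) (w2 : Fin M2) :
    ∑ y : (Fin n → Y1) × (Fin n → Y2), muC ch f1 f2 (w1, w2, y) = 1 / (M1 * M2) := by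
  simp only [muC]
  rw [← Finset.mul_sum, Fintype.sum_prod_type]
  have : ∀ y1 : Fin n → Y1, ∑ y2 : Fin n → Y2,
      ∏ i, ch.W (f1 w1 w2 i) (f2 w2 i) (y1 i) (y2 i) =
      ∏ i, W1 ch (f1 w1 w2 i) (f2 w2 i) (y1 i) := by
    intro y1
    simp only [W1]
    rw [Fintype.prod_sum]
  simp only [this]
  rw [← Fintype.prod_sum (fun i y => W1 ch (f1 w1 w2 i) (f2 w2 i) y)]
  simp [W1_sum]

end Converse
section Final
variable {n M1 M2 : ℕ}

theorem LL_pbar (ch : DMIFC X1 X2 Y1 Y2) (f1 : Fin M1 → Fin M2 → Fin n → X1)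
    (f2 : Fin M2 → Fin n → X2) : LL ch (pbar ch f1 f2) =
      (n : ℝ)⁻¹ * ∑ i, ∑ ω, muC ch f1 f2 ω * Hh (W1 ch (f1 ω.1 ω.2.1 i) (f2 ω.2.1 i)) := by
  have h : ∀ i, ∑ ω, muC ch f1 f2 ω * Hh (W1 ch (f1 ω.1 ω.2.1 i) (f2 ω.2.1 i)) =
      ∑ x1, ∑ x2, pin ch f1 f2 i x1 x2 * Hh (W1 ch x1 x2) := by
    intro i
    rw [← sum_lawOf_mul (muC ch f1 f2) (fun ω => (f1 ω.1 ω.2.1 i, f2 ω.2.1 i))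
      (fun x => Hh (W1 ch x.1 x.2)), Fintype.sum_prod_type]
    rfl
  simp only [h, LL, pbar, Finset.sum_mul, Finset.mul_sum]
  symm
  rw [Finset.sum_comm]
  refine Finset.sum_congr rfl fun x1 _ => ?_
  rw [Finset.sum_comm]
  refine Finset.sum_congr rfl fun x2 _ => Finset.sum_congr rfl fun i _ => ?_
  ring

theorem stepL (ch : DMIFC X1 X2 Y1 Y2) (f1 : Fin M1 → Fin M2 → Fin n → X1)
    (f2 : Fin M2 → Fin n → X2) :
    LL ch (pbar ch f1 f2) ≤ (n : ℝ)⁻¹ * condH (muC ch f1 f2) (fun ω => ω.2.2.1)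
      (fun ω => (ω.1, ω.2.1)) := by
  rw [LL_pbar, chain]
  refine mul_le_mul_of_nonneg_left (Finset.sum_le_sum fun i _ => ?_) (by positivity)
  refine le_trans ?_ (condH_le _ (muC_nonneg ch f1 f2) _
    (fun ω => (f2 ω.2.1 i, (ml i ω.2.2.1, (ω.1, ω.2.1)))) _ ?_)
  · rw [condH_eq, ← sum_lawOf_mul (muC ch f1 f2)
      (fun ω => (f1 ω.1 ω.2.1 i, (f2 ω.2.1 i, (ml i ω.2.2.1, (ω.1, ω.2.1)))))
      (fun x => Hh (W1 ch x.1 x.2.1)), Fintype.sum_prod_type, Finset.sum_comm]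
    refine Finset.sum_le_sum fun v _ => ?_
    obtain ⟨b, v⟩ := v
    have : (fun y => lawOf (muC ch f1 f2)
        (fun ω => (ω.2.2.1 i, (f2 ω.2.1 i, (ml i ω.2.2.1, (ω.1, ω.2.1))))) (y, (b, v))) =
        fun y => ∑ x1, lawOf (muC ch f1 f2) (fun ω => (f1 ω.1 ω.2.1 i,
          (f2 ω.2.1 i, (ml i ω.2.2.1, (ω.1, ω.2.1))))) (x1, (b, v)) * W1 ch x1 b y := by
      ext y
      exact lawG1 ch f1 f2 i (fun ω => (ml i ω.2.2.1, (ω.1, ω.2.1)))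
        (fun ω c => by simp [upd, ml_update]) y b v
    rw [this]
    refine le_trans (le_of_eq ?_) (Hh_sum_le _ fun x1 y =>
      mul_nonneg (lawOf_nonneg (muC_nonneg ch f1 f2) _ _) (W1_nonneg _ _ _ _))
    refine Finset.sum_congr rfl fun x1 _ => ?_
    rw [Hh_smul]
  · intro ω ω' h
    exact (Prod.mk.inj h).2

theorem stepA (ch : DMIFC X1 X2 Y1 Y2) (f1 : Fin M1 → Fin M2 → Fin n → X1)
    (f2 : Fin M2 → Fin n → X2) :
    (n : ℝ)⁻¹ * condH (muC ch f1 f2) (fun ω => ω.2.2.1) (fun ω => ω.2.1) ≤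
      HY1X2 ch (pbar ch f1 f2) := by
  have h1 : condH (muC ch f1 f2) (fun ω => ω.2.2.1) (fun ω => ω.2.1) ≤
      ∑ i, ∑ b, Hh (fun y => ∑ x1, pin ch f1 f2 i x1 b * W1 ch x1 b y) := by
    rw [chain]
    refine Finset.sum_le_sum fun i _ => ?_
    refine (condH_le _ (muC_nonneg ch f1 f2) _ _ (fun ω => (f2 ω.2.1 i, ())) ?_).trans ?_
    · intro ω ω' h
      rw [(Prod.mk.inj h).2]
    · rw [condH_eq, Fintype.sum_prod_type]
      refine le_of_eq (Finset.sum_congr rfl fun b _ => ?_)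
      simp only [Finset.univ_unique, Finset.sum_singleton]
      congr 1
      ext y
      rw [show (default : Unit) = () from rfl,
        lawG1 ch f1 f2 i (fun _ => ()) (fun _ _ => rfl)]
      refine Finset.sum_congr rfl fun x1 _ => ?_
      congr 1
      simp [lawOf, pin]
  refine (mul_le_mul_of_nonneg_left h1 (by positivity)).trans ?_
  rw [Finset.sum_comm, Finset.mul_sum, HY1X2]
  refine Finset.sum_le_sum fun b _ => ?_
  rw [Finset.mul_sum]
  simp only [← Hh_smul]
  refine (Hh_sum_le _ ?_).trans (le_of_eq ?_)
  · intro i y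
    exact mul_nonneg (by positivity) (Finset.sum_nonneg fun x1 _ =>
      mul_nonneg (pin_nonneg _ _ _ _ _ _) (W1_nonneg _ _ _ _))
  · congr 1
    ext y
    simp only [pbar, Finset.mul_sum, Finset.sum_mul]
    rw [Finset.sum_comm]
    simp only [mul_assoc]

theorem sum_muC (ch : DMIFC X1 X2 Y1 Y2) (f1 : Fin M1 → Fin M2 → Fin n → X1)
    (f2 : Fin M2 → Fin n → X2) (h1 : 0 < M1) (h2 : 0 < M2) : ∑ ω, muC ch f1 f2 ω = 1 := by
  have h1' : (0:ℝ) < M1 := by exact_mod_cast h1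
  have h2' : (0:ℝ) < M2 := by exact_mod_cast h2
  rw [Fintype.sum_prod_type]
  simp only [Fintype.sum_prod_type (α₁ := Fin M2), sum_law_msg]
  simp
  field_simp

theorem stepB (ch : DMIFC X1 X2 Y1 Y2) (f1 : Fin M1 → Fin M2 → Fin n → X1)
    (f2 : Fin M2 → Fin n → X2) (h1 : 0 < M1) (h2 : 0 < M2) :
    (n : ℝ)⁻¹ * entRV (muC ch f1 f2) (fun ω => ω.2.2.2) ≤ HY2 ch (pbar ch f1 f2) := by
  have hunit : entRV (muC ch f1 f2) (fun _ => ()) = 0 := by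
    simp [entRV, ent, lawOf, sum_muC ch f1 f2 h1 h2]
  have h0 : entRV (muC ch f1 f2) (fun ω => ω.2.2.2) =
      condH (muC ch f1 f2) (fun ω => ω.2.2.2) (fun _ => ()) := by
    rw [condH, hunit, sub_zero]
    exact entRV_congr _ _ _ fun ω ω' => by simp
  have h1 : entRV (muC ch f1 f2) (fun ω => ω.2.2.2) ≤
      ∑ i, Hh (fun y => ∑ x1, ∑ x2, pin ch f1 f2 i x1 x2 * W2 ch x1 x2 y) := by
    rw [h0, chain]
    refine Finset.sum_le_sum fun i _ => ?_
    refine (condH_le _ (muC_nonneg ch f1 f2) _ _ (fun ω => ()) (fun _ _ _ => rfl)).trans ?_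
    rw [condH_eq]
    simp only [Finset.univ_unique, Finset.sum_singleton]
    refine le_of_eq ?_
    congr 1
    ext y
    have := factor ch f1 f2 i (fun _ => 1) (fun _ _ => rfl) (fun c => if c.2 = y then 1 else 0)
    simp only [sum_W2] at this
    rw [← Fintype.sum_prod_type' (f := fun x1 x2 => pin ch f1 f2 i x1 x2 * W2 ch x1 x2 y)]
    simp only [pin]
    rw [sum_lawOf_mul (muC ch f1 f2) (fun ω => (f1 ω.1 ω.2.1 i, f2 ω.2.1 i))
      (fun x => W2 ch x.1 x.2 y)]
    simp only [mul_one] at this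
    rw [← this]
    simp [lawOf]
  refine (mul_le_mul_of_nonneg_left h1 (by positivity)).trans ?_
  rw [Finset.mul_sum, HY2]
  simp only [← Hh_smul]
  refine (Hh_sum_le _ ?_).trans (le_of_eq ?_)
  · intro i y
    exact mul_nonneg (by positivity) (Finset.sum_nonneg fun x1 _ => Finset.sum_nonneg fun x2 _ =>
      mul_nonneg (pin_nonneg _ _ _ _ _ _) (W2_nonneg _ _ _ _))
  · congr 1
    ext y
    simp only [pbar, Finset.mul_sum, Finset.sum_mul]
    rw [Finset.sum_comm]
    refine Finset.sum_congr rfl fun x1 _ => ?_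
    rw [Finset.sum_comm]
    simp only [mul_assoc]

/-- The auxiliary variable. -/
def VV (f2 : Fin M2 → Fin n → X2) (i : Fin n) (ω : Om n M1 M2 Y1 Y2) :
    X2 × (Fin M2 × (Fin n → Option Y2) × (Fin n → Option Y1)) :=
  (f2 ω.2.1 i, (ω.2.1, ml i ω.2.2.2, mg (i + 1) ω.2.2.1))

theorem stepT (ch : DMIFC X1 X2 Y1 Y2) (f1 : Fin M1 → Fin M2 → Fin n → X1)
    (f2 : Fin M2 → Fin n → X2) (hn : 0 < n) (h1 : 0 < M1) (h2 : 0 < M2) :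
    ((pbar ch f1 f2,
      (n : ℝ)⁻¹ * ∑ i, condH (muC ch f1 f2) (fun ω => ω.2.2.1 i) (VV f2 i),
      (n : ℝ)⁻¹ * ∑ i, condH (muC ch f1 f2) (fun ω => ω.2.2.2 i) (VV f2 i)) : ES X1 X2) ∈ TT ch := by
  have hn' : (n : ℝ) ≠ 0 := by exact_mod_cast hn.ne'
  have key := cone_mem_TT ch
    (ι := Fin n × (X2 × (Fin M2 × (Fin n → Option Y2) × (Fin n → Option Y1))))
    (fun k => k.2.1)
    (fun k x1 => (n : ℝ)⁻¹ * lawOf (muC ch f1 f2) (fun ω => (f1 ω.1 ω.2.1 k.1, VV f2 k.1 ω)) (x1, k.2))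
    (fun k a => mul_nonneg (by positivity) (lawOf_nonneg (muC_nonneg ch f1 f2) _ _)) ?_
  · convert key using 1
    ext x1 x2
    · simp only [Prod.fst_sum, Psi, Finset.sum_apply, pbar]
      rw [Fintype.sum_prod_type]
      refine Finset.sum_congr rfl fun i _ => ?_
      simp only [pin, lawOf, Finset.mul_sum]
      rw [Fintype.sum_prod_type (α₁ := X2), Finset.sum_eq_single x2]
      · simp only [if_true]
        rw [Finset.sum_comm]
        refine Finset.sum_congr rfl fun ω _ => ?_
        rw [Finset.sum_eq_single (VV f2 i ω).2]
        · simp [VV]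
        · intro v _ hv
          rw [if_neg, mul_zero]
          intro h
          apply hv
          rw [(Prod.mk.inj h).2]
        · simp
      · intro b _ hb
        simp [hb.symm]
      · simp
    · simp only [Prod.fst_sum, Prod.snd_sum, Psi]
      rw [Fintype.sum_prod_type, Finset.mul_sum]
      refine Finset.sum_congr rfl fun i _ => ?_
      rw [condH_eq, Finset.mul_sum]
      refine Finset.sum_congr rfl fun v _ => ?_
      rw [← Hh_smul]
      congr 1
      ext y
      simp only [mul_assoc, ← Finset.mul_sum]
      congr 1
      exact lawG1 ch f1 f2 i (fun ω => (VV f2 i ω).2)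
        (fun ω c => by simp [upd, VV, ml_update, mg_update]) y v.1 v.2
    · simp only [Prod.snd_sum, Psi]
      rw [Fintype.sum_prod_type, Finset.mul_sum]
      refine Finset.sum_congr rfl fun i _ => ?_
      rw [condH_eq, Finset.mul_sum]
      refine Finset.sum_congr rfl fun v _ => ?_
      rw [← Hh_smul]
      congr 1
      ext y
      simp only [mul_assoc, ← Finset.mul_sum]
      congr 1
      exact lawG2 ch f1 f2 i (fun ω => (VV f2 i ω).2)
        (fun ω c => by simp [upd, VV, ml_update, mg_update]) y v.1 v.2
  · simp only [← Finset.mul_sum]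
    rw [Fintype.sum_prod_type]
    have : ∀ i : Fin n, ∑ v, ∑ a, lawOf (muC ch f1 f2)
        (fun ω => (f1 ω.1 ω.2.1 i, VV f2 i ω)) (a, v) = 1 := by
      intro i
      rw [Finset.sum_comm, ← Fintype.sum_prod_type, sum_lawOf, sum_muC ch f1 f2 h1 h2]
    simp only [this]
    simp [hn']

theorem muC_pe1 (ch : DMIFC X1 X2 Y1 Y2) (f1 : Fin M1 → Fin M2 → Fin n → X1)
    (f2 : Fin M2 → Fin n → X2) (g1 : (Fin n → Y1) → Fin M1) :
    ∑ ω, muC ch f1 f2 ω * (if g1 ω.2.2.1 = ω.1 then 0 else 1) = pe1 ch n M1 M2 f1 f2 g1 := by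
  simp only [Fintype.sum_prod_type, pe1, muC, Finset.mul_sum, mul_assoc]

theorem muC_pe2 (ch : DMIFC X1 X2 Y1 Y2) (f1 : Fin M1 → Fin M2 → Fin n → X1)
    (f2 : Fin M2 → Fin n → X2) (g2 : (Fin n → Y2) → Fin M2) :
    ∑ ω, muC ch f1 f2 ω * (if g2 ω.2.2.2 = ω.2.1 then 0 else 1) = pe2 ch n M1 M2 f1 f2 g2 := by
  simp only [Fintype.sum_prod_type, pe2, muC, Finset.mul_sum, mul_assoc]

theorem ent_W12 (ch : DMIFC X1 X2 Y1 Y2) (f1 : Fin M1 → Fin M2 → Fin n → X1)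
    (f2 : Fin M2 → Fin n → X2) (h1 : 0 < M1) (h2 : 0 < M2) :
    entRV (muC ch f1 f2) (fun ω => (ω.1, ω.2.1)) = Real.logb 2 M1 + Real.logb 2 M2 := by
  have h1' : (0:ℝ) < M1 := by exact_mod_cast h1
  have h2' : (0:ℝ) < M2 := by exact_mod_cast h2
  rw [logb_uniform _ _ (M1 * M2 : ℝ) (by positivity) (by simp), Real.logb_mul h1'.ne' h2'.ne']
  rintro ⟨w1, w2⟩
  rw [← sum_law_msg ch f1 f2 w1 w2, lawOf, Fintype.sum_prod_type]
  simp only [Fintype.sum_prod_type (α₁ := Fin M2), Prod.mk.injEq, ite_and]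
  simp
  rw [Finset.sum_eq_single w2]
  · simp
  · intro b _ hb; simp [hb]
  · simp

theorem ent_W2 (ch : DMIFC X1 X2 Y1 Y2) (f1 : Fin M1 → Fin M2 → Fin n → X1)
    (f2 : Fin M2 → Fin n → X2) (h1 : 0 < M1) (h2 : 0 < M2) :
    entRV (muC ch f1 f2) (fun ω => ω.2.1) = Real.logb 2 M2 := by
  have h1' : (0:ℝ) < M1 := by exact_mod_cast h1
  have h2' : (0:ℝ) < M2 := by exact_mod_cast h2
  refine logb_uniform _ _ (M2 : ℝ) (by positivity) (by simp) ?_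
  intro w2
  have : ∀ w1, ∑ y : (Fin n → Y1) × (Fin n → Y2), muC ch f1 f2 (w1, w2, y) = 1 / (M1 * M2) :=
    fun w1 => sum_law_msg ch f1 f2 w1 w2
  have h3 : lawOf (muC ch f1 f2) (fun ω => ω.2.1) w2 =
      ∑ w1, ∑ y : (Fin n → Y1) × (Fin n → Y2), muC ch f1 f2 (w1, w2, y) := by
    rw [lawOf, Fintype.sum_prod_type]
    refine Finset.sum_congr rfl fun w1 _ => ?_
    rw [Fintype.sum_prod_type (α₁ := Fin M2), Finset.sum_eq_single w2]
    · simp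
    · intro b _ hb; simp [hb]
    · simp
  rw [h3]
  simp only [this]
  simp
  field_simp

theorem code_bound (ch : DMIFC X1 X2 Y1 Y2) (f1 : Fin M1 → Fin M2 → Fin n → X1)
    (f2 : Fin M2 → Fin n → X2) (g1 : (Fin n → Y1) → Fin M1) (g2 : (Fin n → Y2) → Fin M2)
    (hn : 0 < n) (h1 : 0 < M1) (h2 : 0 < M2) (ε : ℝ) (hε : 0 < ε) (hε1 : ε < 1)
    (hp1 : pe1 ch n M1 M2 f1 f2 g1 ≤ ε) (hp2 : pe2 ch n M1 M2 f1 f2 g2 ≤ ε) (R1 R2 : ℝ)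
    (hR1 : R1 - ε ≤ Real.logb 2 M1 / n) (hR2 : R2 - ε ≤ Real.logb 2 M2 / n) :
    ((1 - ε) * (R1 - ε) + Real.logb 2 (1 - ε) + ε * Real.logb 2 ε,
      (1 - ε) * (R2 - ε) + Real.logb 2 (1 - ε) + ε * Real.logb 2 ε) ∈ Rc ch := by
  have hn1 : (1:ℝ) ≤ n := by exact_mod_cast hn
  have hn' : (0:ℝ) < n := by linarith
  set μ := muC ch f1 f2 with hμ
  have hμ0 := muC_nonneg ch f1 f2
  have hμ1 := sum_muC ch f1 f2 h1 h2
  have F1 := fano μ hμ0 hμ1 (fun ω => ω.1) (fun ω => g1 ω.2.2.1) h1 ε hε hε1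
    (by rw [muC_pe1]; exact hp1)
  have F2 := fano μ hμ0 hμ1 (fun ω => ω.2.1) (fun ω => g2 ω.2.2.2) h2 ε hε hε1
    (by rw [muC_pe2]; exact hp2)
  have F1' := (condH_le μ hμ0 (fun ω => ω.1) (fun ω => (ω.2.2.1, ω.2.1)) (fun ω => g1 ω.2.2.1)
    (fun ω ω' h => by rw [(Prod.mk.inj h).1])).trans F1
  have F2' := (condH_le μ hμ0 (fun ω => ω.2.1) (fun ω => ω.2.2.2) (fun ω => g2 ω.2.2.2)
    (fun ω ω' h => by rw [h])).trans F2
  have c1 : entRV μ (fun ω => (ω.1, (ω.2.2.1, ω.2.1))) =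
      entRV μ (fun ω => (ω.2.2.1, (ω.1, ω.2.1))) :=
    entRV_congr _ _ _ fun ω ω' => by simp only [Prod.mk.injEq]; tauto
  have c2 : entRV μ (fun ω => (ω.2.1, ω.2.2.2)) = entRV μ (fun ω => (ω.2.2.2, ω.2.1)) :=
    entRV_congr _ _ _ fun ω ω' => by simp only [Prod.mk.injEq]; tauto
  have u12 := ent_W12 ch f1 f2 h1 h2
  have u2 := ent_W2 ch f1 f2 h1 h2
  rw [← hμ] at u12 u2
  have sL := stepL ch f1 f2
  have sA := stepA ch f1 f2
  have sB := stepB ch f1 f2 h1 h2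
  have sC := csiszar μ (fun ω => ω.2.2.1) (fun ω => ω.2.2.2) (fun ω => ω.2.1)
    (fun i ω => f2 ω.2.1 i) (fun i ω ω' h => by rw [h])
  rw [Finset.sum_sub_distrib] at sC
  change ∑ i, condH μ (fun ω => ω.2.2.1 i) (VV f2 i) -
    ∑ i, condH μ (fun ω => ω.2.2.2 i) (VV f2 i) = _ at sC
  have sD : ∑ i, condH μ (fun ω => ω.2.2.2 i) (VV f2 i) ≤
      condH μ (fun ω => ω.2.2.2) (fun ω => ω.2.1) := by
    rw [chain]
    refine Finset.sum_le_sum fun i _ => condH_le _ hμ0 _ _ _ fun ω ω' h => ?_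
    simp only [VV, Prod.mk.injEq] at h
    simp only [Prod.mk.injEq]; tauto
  rw [← hμ] at sL sA sB
  set D := -Real.logb 2 (1 - ε) - ε * Real.logb 2 ε with hD
  have hD0 : 0 ≤ D := by
    have hle : Real.logb 2 ε ≤ 0 := Real.logb_nonpos (by norm_num) hε.le hε1.le
    have hl1 : Real.logb 2 (1-ε) ≤ 0 :=
      Real.logb_nonpos (by norm_num) (by linarith) (by linarith)
    rw [hD]; nlinarith
  have hDn : (n:ℝ)⁻¹ * D ≤ D := mul_le_of_le_one_left hD0 (inv_le_one_of_one_le₀ hn1)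
  have hR1' : (1 - ε) * (R1 - ε) ≤ (n:ℝ)⁻¹ * ((1 - ε) * Real.logb 2 M1) := by
    refine (mul_le_mul_of_nonneg_left hR1 (by linarith)).trans (le_of_eq ?_)
    field_simp
  have hR2' : (1 - ε) * (R2 - ε) ≤ (n:ℝ)⁻¹ * ((1 - ε) * Real.logb 2 M2) := by
    refine (mul_le_mul_of_nonneg_left hR2 (by linarith)).trans (le_of_eq ?_)
    field_simp
  have hc : (0:ℝ) ≤ (n:ℝ)⁻¹ := by positivity
  -- main single-code inequalities
  have I1 : (1 - ε) * Real.logb 2 M1 - D ≤ condH μ (fun ω => ω.2.2.1) (fun ω => ω.2.1) -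
      condH μ (fun ω => ω.2.2.1) (fun ω => (ω.1, ω.2.1)) := by
    simp only [condH] at F1' ⊢
    linarith
  have I2 : (1 - ε) * Real.logb 2 M2 - D ≤ entRV μ (fun ω => ω.2.2.2) -
      condH μ (fun ω => ω.2.2.2) (fun ω => ω.2.1) := by
    simp only [condH] at F2' ⊢
    linarith
  have J1 := mul_le_mul_of_nonneg_left I1 hc
  have J2 := mul_le_mul_of_nonneg_left I2 hc
  have JD := mul_le_mul_of_nonneg_left sD hc
  have JC := congrArg (fun t => (n:ℝ)⁻¹ * t) sC
  simp only [mul_sub] at J1 J2 JC hR1' hR2'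
  refine ⟨_, stepT ch f1 f2 hn h1 h2, ?_, ?_, ?_⟩
  · dsimp only
    linarith
  · dsimp only
    linarith
  · dsimp only
    linarith

theorem achievable_mem_Rc (ch : DMIFC X1 X2 Y1 Y2) (R : ℝ × ℝ) (h : AchievableT1 ch R.1 R.2) :
    R ∈ Rc ch := by
  have hlim : ∀ r : ℝ, Filter.Tendsto (fun ε : ℝ => (1 - ε) * (r - ε) + Real.logb 2 (1 - ε)
      + ε * Real.logb 2 ε) (nhdsWithin 0 (Set.Ioi 0)) (nhds r) := by
    intro r
    have hc : ContinuousAt (fun ε : ℝ => (1 - ε) * (r - ε) + Real.logb 2 (1 - ε)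
      + ε * Real.logb 2 ε) 0 := by
      refine ContinuousAt.add (ContinuousAt.add (by fun_prop) ?_) continuous_mul_logb.continuousAt
      unfold Real.logb
      refine ContinuousAt.div_const (ContinuousAt.log (by fun_prop) (by norm_num)) _
    have := hc.tendsto
    simp only [sub_zero, one_mul, Real.logb_one, zero_mul, add_zero] at this
    exact this.mono_left nhdsWithin_le_nhds
  have hl2 := (hlim R.1).prodMk_nhds (hlim R.2)
  refine (isClosed_Rc ch).mem_of_tendsto hl2 ?_
  filter_upwards [Ioo_mem_nhdsGT (show (0:ℝ) < 1 by norm_num)] with ε hε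
  obtain ⟨n, M1, M2, f1, f2, g1, g2, hn, h1, h2, hR1, hR2, hp1, hp2⟩ := h ε hε.1
  exact code_bound ch f1 f2 g1 g2 hn h1 h2 ε hε.1 hε.2 hp1 hp2 R.1 R.2 hR1 hR2

end Final

/-- **Theorem 2 (outer bound).**  For every two-user discrete memoryless interference
channel with degraded message sets in which transmitter 1 knows both messages, the
capacity region satisfies `C^{T₁}_{IFC} ⊆ ℛ_o`. -/
theorem capacityT1_subset_Ro (ch : DMIFC X1 X2 Y1 Y2) : CapacityT1 ch ⊆ Ro ch := by
  exact (closure_minimal (fun R hR => achievable_mem_Rc ch R hR) (isClosed_Rc ch)).trans (Rc_subset_Ro ch)
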